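/- For every nonnegative integer r and every integer i, one has L_i · Y^r = Σ_{p=0}^{r} Σ_{q=0}^{2p} (−1)^p · α^q · (r!/(r−p)!) · a_q(p,i) · Y^{r−p} · L_{i+(p−q)m}. -/

import Mathlib

/-! Right multiplication by `Y` is the sum of the commuting operators `x ↦ Y x`
and `x ↦ x Y − Y x`, so the binomial theorem expands `L_i Y^r` in terms of the iterated commutators
of `L_i` with `Y`. It remains to see that
`(ad Y)^p (L_i) = p! Σ_q α^q a_q(p,i) L_{i+(p−q)m}`.

Conceptually `ad Y` is the conjugate of `U = ad L_m` by `E = exp(α ad L_{−m})`, so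
`(ad Y)^p = E U^p E⁻¹`, and `a_q(p,i)` is read off from `E`, `U^p`, `E⁻¹` in the basis `L_j`.
Concretely, `E U = (ad Y) E` is the scalar identity `gb_intertwine`; summing it gives the recursion
`aC_succ_add_two` (with `aC_succ_zero`, `aC_succ_one` for the boundary indices), which is the action
of `ad Y` on `Σ_q α^q a_q(p,i) L_{i+(p−q)m}`. The base case `a_q(0,i) = δ_{q,0}` is `E E⁻¹ = 1`, and
the recursion propagates the vanishing `a_q(p,i) = 0` for `q > 2p`. -/

noncomputable section

variable {F : Type*} [Field F] [CharZero F]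

/- Generalized binomial coefficient [a; r]_k = a(a-k)(a-2k)⋯(a-(r-1)k)/r!, with [a; 0]_k = 1. -/
def gb (a k : F) (r : ℕ) : F :=
  (∏ j ∈ Finset.range r, (a - (j : F) * k)) / (r.factorial : F)

/- x_a^{<r>} = (x+a)(x+a+1)⋯(x+a+r-1), empty product equal to 1. -/
def ascF {A : Type*} [Ring A] [Algebra F A] (x : A) (a : F) (r : ℕ) : A :=
  ((List.range r).map fun j : ℕ => x + algebraMap F A (a + (j : F))).prod

/- x_a^{[r]} = (x+a)(x+a-1)⋯(x+a-r+1), empty product equal to 1. -/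
def descF {A : Type*} [Ring A] [Algebra F A] (x : A) (a : F) (r : ℕ) : A :=
  ((List.range r).map fun j : ℕ => x + algebraMap F A (a - (j : F))).prod

/- a_s(r,i) = Σ_{p=0}^{s} (−1)^p [i+m; p]_m [i+(r−p−2)m; r]_m [i+(r−p+1)m; s−p]_m. -/
def aC (m : F) (r s : ℕ) (i : F) : F :=
  ∑ p ∈ Finset.range (s + 1),
    (-1 : F) ^ p * gb (i + m) m p * gb (i + ((r : F) - (p : F) - 2) * m) m r *
      gb (i + ((r : F) - (p : F) + 1) * m) m (s - p)

/- b_s(r,k) = Σ_{p=0}^{s} (−1)^p [k+m/2; p]_m [k+(r−p−3/2)m; r]_m [k+(r−p+1/2)m; s−p]_m. -/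
def bC (m : F) (r s : ℕ) (k : F) : F :=
  ∑ p ∈ Finset.range (s + 1),
    (-1 : F) ^ p * gb (k + m / 2) m p * gb (k + ((r : F) - (p : F) - 3 / 2) * m) m r *
      gb (k + ((r : F) - (p : F) + 1 / 2) * m) m (s - p)

lemma gb_zero (a k : F) : gb a k 0 = 1 := by simp [gb]

lemma gb_one (a k : F) : gb a k 1 = a := by simp [gb]

lemma gb_succ (a k : F) (n : ℕ) :
    ((n : F) + 1) * gb a k (n + 1) = (a - n * k) * gb a k n := by
  have h1 : (n.factorial : F) ≠ 0 := by exact_mod_cast n.factorial_ne_zero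
  have h2 : (n : F) + 1 ≠ 0 := by exact_mod_cast n.succ_ne_zero
  simp only [gb, Finset.prod_range_succ, Nat.factorial_succ, Nat.cast_mul, Nat.cast_add,
    Nat.cast_one]
  generalize ∏ j ∈ Finset.range n, (a - (j : F) * k) = P
  field_simp

lemma gb_succ_shift (a k : F) (n : ℕ) :
    ((n : F) + 1) * gb (a + k) k (n + 1) = (a + k) * gb a k n := by
  have h1 : (n.factorial : F) ≠ 0 := by exact_mod_cast n.factorial_ne_zero
  have h2 : (n : F) + 1 ≠ 0 := by exact_mod_cast n.succ_ne_zero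
  have h3 : ∀ j : ℕ, a + k - ((j + 1 : ℕ) : F) * k = a - j * k := by
    intro j; push_cast; ring
  simp only [gb, Finset.prod_range_succ', h3, Nat.factorial_succ, Nat.cast_mul]
  generalize ∏ j ∈ Finset.range n, (a - (j : F) * k) = P
  push_cast
  field_simp
  ring

/-- Pascal's rule. -/
lemma gb_pascal (a k : F) (n : ℕ) :
    gb (a + k) k (n + 1) = gb a k (n + 1) + k * gb a k n := by
  have h2 : (n : F) + 1 ≠ 0 := by exact_mod_cast n.succ_ne_zero
  apply mul_left_cancel₀ h2
  rw [gb_succ_shift, mul_add, gb_succ]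
  ring

/-- The matrix form of `exp(ad L_{−m}) ∘ ad L_m = ad Y ∘ exp(ad L_{−m})` (with `α = 1`, `k = m`). -/
lemma gb_intertwine (a k : F) (n : ℕ) :
    (a - 2 * k) * gb (a + k) k (n + 2)
      = (a - (n + 4) * k) * gb a k (n + 2) + 2 * k * (a - (n + 2) * k) * gb a k (n + 1)
        + k ^ 2 * (a - n * k) * gb a k n := by
  have e1 := gb_succ a k n
  have e2 := gb_succ a k (n + 1)
  rw [gb_pascal]
  push_cast at e2
  linear_combination k * k * e1 + k * e2

lemma gb_intertwine_one (a k : F) :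
    (a - 2 * k) * gb (a + k) k 1
      = (a - 3 * k) * gb a k 1 + 2 * k * (a - k) * gb a k 0 := by
  rw [gb_one, gb_one, gb_zero]; ring

/-- The splitting behind `E E⁻¹ = 1`: each summand of `a_s(0,i)` is a binomial multiple of
`[i+m; s]_m`. -/
lemma gb_mul (a k : F) (p n : ℕ) :
    gb a k p * gb (a - p * k) k n = ((p + n).choose p : F) * gb a k (p + n) := by
  have h1 : (p.factorial : F) ≠ 0 := by exact_mod_cast p.factorial_ne_zero
  have h2 : (n.factorial : F) ≠ 0 := by exact_mod_cast n.factorial_ne_zero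
  have h3 : ((p + n).factorial : F) ≠ 0 := by exact_mod_cast (p + n).factorial_ne_zero
  have h4 : ((p + n).choose p : F) * (p.factorial : F) * (n.factorial : F)
      = ((p + n).factorial : F) := by
    have h := Nat.add_choose_mul_factorial_mul_factorial p n
    rw [← Nat.choose_symm_add] at h
    exact_mod_cast h
  have h5 : ∀ j : ℕ, a - p * k - (j : F) * k = a - ((p + j : ℕ) : F) * k := by
    intro j; push_cast; ring
  simp only [gb, Finset.prod_range_add, h5]
  generalize ∏ j ∈ Finset.range p, (a - (j : F) * k) = P
  generalize ∏ j ∈ Finset.range n, (a - ((p + j : ℕ) : F) * k) = Q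
  field_simp
  rw [← h4]; ring

lemma aC_zero_zero (k i : F) : aC k 0 0 i = 1 := by
  simp [aC, gb_zero]

lemma aC_zero_succ (k i : F) (s : ℕ) : aC k 0 (s + 1) i = 0 := by
  have h : ∀ p ∈ Finset.range (s + 1 + 1),
      (-1 : F) ^ p * gb (i + k) k p * gb (i + (((0 : ℕ) : F) - (p : F) - 2) * k) k 0 *
        gb (i + (((0 : ℕ) : F) - (p : F) + 1) * k) k (s + 1 - p)
      = (((-1 : ℤ) ^ p * ((s + 1).choose p : ℤ) : ℤ) : F) * gb (i + k) k (s + 1) := by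
    intro p hp
    obtain ⟨n, hn⟩ : ∃ n, s + 1 = p + n :=
      Nat.exists_eq_add_of_le (by have := Finset.mem_range.mp hp; omega)
    have e := gb_mul (i + k) k p n
    have e' : i + (((0 : ℕ) : F) - (p : F) + 1) * k = i + k - p * k := by push_cast; ring
    rw [hn, e', gb_zero, Nat.add_sub_cancel_left]
    push_cast
    linear_combination (-1 : F) ^ p * e
  rw [aC, Finset.sum_congr rfl h, ← Finset.sum_mul, ← Int.cast_sum,
    Int.alternating_sum_range_choose_of_ne (Nat.succ_ne_zero s)]
  simp

/-- The matrix form of `U^{r+1} = U ∘ U^r` for `U = ad L_m`, applied to `L_{i−xm}` and divided by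
`r!`. -/
lemma gb_step (k i x : F) (r : ℕ) :
    ((r : F) + 1) * gb (i + (((r + 1 : ℕ) : F) - x - 2) * k) k (r + 1)
      = (i + ((r : F) - x + 1) * k - 2 * k) * gb (i + ((r : F) - x - 2) * k) k r := by
  have h := gb_succ_shift (i + ((r : F) - x - 2) * k) k r
  have e : i + (((r + 1 : ℕ) : F) - x - 2) * k = i + ((r : F) - x - 2) * k + k := by
    push_cast; ring
  rw [e, h]; ring

lemma shift_eq (k i x : F) (r : ℕ) :
    i + (((r + 1 : ℕ) : F) - x + 1) * k = i + ((r : F) - x + 1) * k + k := by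
  push_cast; ring

lemma aC_succ_zero (k i : F) (r : ℕ) :
    ((r : F) + 1) * aC k (r + 1) 0 i = (i + ((r : F) - 1) * k) * aC k r 0 i := by
  have h := gb_step k i 0 r
  simp only [aC, Finset.sum_range_succ, Finset.sum_range_zero, gb_zero, Nat.sub_self,
    Nat.cast_zero, pow_zero]
  linear_combination h

lemma aC_succ_one (k i : F) (r : ℕ) :
    ((r : F) + 1) * aC k (r + 1) 1 i
      = (i + ((r : F) - 2) * k) * aC k r 1 i + 2 * k * (i + r * k) * aC k r 0 i := by
  have h0 := gb_step k i 0 r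
  have h1 := gb_step k i 1 r
  have e := gb_intertwine_one (i + ((r : F) - 0 + 1) * k) k
  rw [← shift_eq] at e
  simp only [aC, Finset.sum_range_succ, Finset.sum_range_zero, gb_zero, Nat.sub_self,
    Nat.cast_zero, Nat.cast_one, pow_zero, pow_one, Nat.sub_zero] at e ⊢
  linear_combination gb (i + (((r + 1 : ℕ) : F) - 0 + 1) * k) k 1 * h0
    + gb (i + ((r : F) - 0 - 2) * k) k r * e - gb (i + k) k 1 * h1

/-- The coefficients `(r+1) a_q(r+1,i)` are those of the image under `ad Y` of
`Σ_q a_q(r,i) L_{i+(r−q)m}`. -/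
lemma aC_succ_add_two (k i : F) (r q : ℕ) :
    ((r : F) + 1) * aC k (r + 1) (q + 2) i
      = (i + ((r : F) - q - 3) * k) * aC k r (q + 2) i
        + 2 * k * (i + ((r : F) - q - 1) * k) * aC k r (q + 1) i
        + k ^ 2 * (i + ((r : F) - q + 1) * k) * aC k r q i := by
  have key : ∀ p ∈ Finset.range (q + 1),
      ((r : F) + 1) * ((-1 : F) ^ p * gb (i + k) k p
          * gb (i + (((r + 1 : ℕ) : F) - (p : F) - 2) * k) k (r + 1)
          * gb (i + (((r + 1 : ℕ) : F) - (p : F) + 1) * k) k (q + 2 - p))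
      = (i + ((r : F) - q - 3) * k) * ((-1 : F) ^ p * gb (i + k) k p
          * gb (i + ((r : F) - (p : F) - 2) * k) k r
          * gb (i + ((r : F) - (p : F) + 1) * k) k (q + 2 - p))
        + 2 * k * (i + ((r : F) - q - 1) * k) * ((-1 : F) ^ p * gb (i + k) k p
          * gb (i + ((r : F) - (p : F) - 2) * k) k r
          * gb (i + ((r : F) - (p : F) + 1) * k) k (q + 1 - p))
        + k ^ 2 * (i + ((r : F) - q + 1) * k) * ((-1 : F) ^ p * gb (i + k) k p
          * gb (i + ((r : F) - (p : F) - 2) * k) k r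
          * gb (i + ((r : F) - (p : F) + 1) * k) k (q - p)) := by
    intro p hp
    obtain ⟨n, rfl⟩ : ∃ n, q = p + n :=
      Nat.exists_eq_add_of_le (by have := Finset.mem_range.mp hp; omega)
    have h := gb_step k i p r
    have e := gb_intertwine (i + ((r : F) - p + 1) * k) k n
    rw [← shift_eq] at e
    rw [show p + n + 2 - p = n + 2 by omega, show p + n + 1 - p = n + 1 by omega,
      show p + n - p = n by omega]
    push_cast at h e ⊢
    linear_combination (-1 : F) ^ p * gb (i + k) k p
        * gb (i + ((r : F) + 1 - (p : F) + 1) * k) k (n + 2) * h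
      + (-1 : F) ^ p * gb (i + k) k p * gb (i + ((r : F) - (p : F) - 2) * k) k r * e
  have hsum := Finset.sum_congr rfl key
  simp only [Finset.sum_add_distrib, ← Finset.mul_sum] at hsum
  -- The summands `p = q + 1` and `p = q + 2` are boundary cases of `gb_intertwine`.
  have h1 := gb_step k i ((q + 1 : ℕ) : F) r
  have h2 := gb_step k i ((q + 1 + 1 : ℕ) : F) r
  have e1 := gb_intertwine_one (i + ((r : F) - ((q + 1 : ℕ) : F) + 1) * k) k
  rw [← shift_eq] at e1
  simp only [aC, Finset.sum_range_succ _ (q + 1 + 1), Finset.sum_range_succ _ (q + 1),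
    show q + 2 + 1 = q + 1 + 1 + 1 from rfl]
  rw [show q + 2 - (q + 1) = 1 by omega, Nat.sub_self, Nat.sub_self]
  simp only [gb_zero] at e1 ⊢
  push_cast at h1 h2 e1 hsum ⊢
  linear_combination hsum
    + (-1 : F) ^ (q + 1) * gb (i + k) k (q + 1)
        * gb (i + ((r : F) + 1 - ((q : F) + 1) + 1) * k) k 1 * h1
    + (-1 : F) ^ (q + 1) * gb (i + k) k (q + 1)
        * gb (i + ((r : F) - ((q : F) + 1) - 2) * k) k r * e1
    + (-1 : F) ^ (q + 2) * gb (i + k) k (q + 2) * h2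

lemma aC_eq_zero (k i : F) (r : ℕ) : ∀ q, 2 * r < q → aC k r q i = 0 := by
  induction r with
  | zero =>
    intro q hq
    obtain ⟨s, rfl⟩ : ∃ s, q = s + 1 := ⟨q - 1, by omega⟩
    exact aC_zero_succ k i s
  | succ r ih =>
    intro q hq
    obtain ⟨s, rfl⟩ : ∃ s, q = s + 2 := ⟨q - 2, by omega⟩
    have h2 : (r : F) + 1 ≠ 0 := by exact_mod_cast r.succ_ne_zero
    apply mul_left_cancel₀ h2
    rw [aC_succ_add_two, ih _ (by omega), ih _ (by omega), ih _ (by omega)]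
    ring

section Commutators

variable {A : Type*} [Ring A] [Algebra F A]

lemma commutator_L_Y (L : ℤ → A)
    (hL : ∀ i j : ℤ, L i * L j - L j * L i = ((j - i : ℤ) : F) • L (i + j))
    (m : ℤ) (α : F) (j : ℤ) :
    L j * (L m + (2 * α * (m : F)) • L 0 + (α ^ 2 * (m : F) ^ 2) • L (-m))
        - (L m + (2 * α * (m : F)) • L 0 + (α ^ 2 * (m : F) ^ 2) • L (-m)) * L j
      = -(((j : F) - m) • L (j + m) + (2 * α * m * j) • L j
        + (α ^ 2 * m ^ 2 * (j + m)) • L (j - m)) := by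
  have h1 := hL j m
  have h2 := hL j 0
  have h3 := hL j (-m)
  rw [sub_eq_iff_eq_add] at h1 h2 h3
  simp only [mul_add, add_mul, mul_smul_comm, smul_mul_assoc, h1, h2, h3]
  rw [add_zero, ← sub_eq_add_neg]
  push_cast
  module

/-- The element `(ad Y)^p (L_i) / p!`, written out in the `L_j`. -/
def adPow (L : ℤ → A) (m : ℤ) (α : F) (i : ℤ) (p : ℕ) : A :=
  ∑ q ∈ Finset.range (2 * p + 1),
    (α ^ q * aC (m : F) p q (i : F)) • L (i + ((p : ℤ) - (q : ℤ)) * m)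

lemma commutator_adPow (L : ℤ → A)
    (hL : ∀ i j : ℤ, L i * L j - L j * L i = ((j - i : ℤ) : F) • L (i + j))
    (m : ℤ) (α : F)
    (Y : A) (hY : Y = L m + (2 * α * (m : F)) • L 0 + (α ^ 2 * (m : F) ^ 2) • L (-m))
    (i : ℤ) (p : ℕ) :
    adPow L m α i p * Y - Y * adPow L m α i p
      = -(((p : F) + 1) • adPow L m α i (p + 1)) := by
  -- `X0`, `X1`, `X2`: the parts of the `q`-th summand of `ad Y (adPow p)` that land in
  -- `L_{i+(p+1-q)m}`, `L_{i+(p-q)m}`, `L_{i+(p-1-q)m}`.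
  let c : ℕ → F := fun q => aC (m : F) p q (i : F)
  let V : ℕ → A := fun q => L (i + (((p + 1 : ℕ) : ℤ) - (q : ℤ)) * m)
  let X0 : ℕ → A := fun q => (α ^ q * c q * ((i : F) + ((p : F) - q - 1) * m)) • V q
  let X1 : ℕ → A := fun q =>
    (α ^ (q + 1) * c q * (2 * m * ((i : F) + ((p : F) - q) * m))) • V (q + 1)
  let X2 : ℕ → A := fun q =>
    (α ^ (q + 2) * c q * (m ^ 2 * ((i : F) + ((p : F) - q + 1) * m))) • V (q + 2)
  have hc : ∀ q, 2 * p < q → c q = 0 := aC_eq_zero (m : F) (i : F) p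
  have lhs : adPow L m α i p * Y - Y * adPow L m α i p
      = -(∑ q ∈ Finset.range (2 * p + 1), X0 q + ∑ q ∈ Finset.range (2 * p + 1), X1 q
        + ∑ q ∈ Finset.range (2 * p + 1), X2 q) := by
    rw [adPow, Finset.sum_mul, Finset.mul_sum, ← Finset.sum_sub_distrib, ← Finset.sum_add_distrib,
      ← Finset.sum_add_distrib, ← Finset.sum_neg_distrib]
    refine Finset.sum_congr rfl fun q _ => ?_
    have h := commutator_L_Y L hL m α (i + ((p : ℤ) - (q : ℤ)) * m)
    rw [← hY] at h
    rw [smul_mul_assoc, mul_smul_comm, ← smul_sub, h]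
    simp only [X0, X1, X2, V, c]
    rw [show i + ((p : ℤ) - q) * m + m = i + (((p + 1 : ℕ) : ℤ) - (q : ℤ)) * m by push_cast; ring,
      show i + ((p : ℤ) - q) * m - m = i + (((p + 1 : ℕ) : ℤ) - ((q + 2 : ℕ) : ℤ)) * m by
        push_cast; ring,
      show i + ((p : ℤ) - q) * m = i + (((p + 1 : ℕ) : ℤ) - ((q + 1 : ℕ) : ℤ)) * m by
        push_cast; ring]
    push_cast
    module
  have rhs : ((p : F) + 1) • adPow L m α i (p + 1)
      = ∑ q ∈ Finset.range (2 * p + 3), X0 q + ∑ q ∈ Finset.range (2 * p + 2), X1 q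
        + ∑ q ∈ Finset.range (2 * p + 1), X2 q := by
    rw [adPow, Finset.smul_sum, show 2 * (p + 1) + 1 = 2 * p + 1 + 1 + 1 by ring,
      Finset.sum_range_succ', Finset.sum_range_succ']
    rw [Finset.sum_range_succ' X0 (2 * p + 2), Finset.sum_range_succ' _ (2 * p + 1),
      Finset.sum_range_succ' X1 (2 * p + 1)]
    have g0 : ((p : F) + 1) • ((α ^ 0 * aC (m : F) (p + 1) 0 (i : F)) •
        L (i + (((p + 1 : ℕ) : ℤ) - ((0 : ℕ) : ℤ)) * m)) = X0 0 := by
      simp only [X0, V, c, smul_smul]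
      congr 1
      have := aC_succ_zero (m : F) (i : F) p
      push_cast
      linear_combination this
    have g1 : ((p : F) + 1) • ((α ^ (0 + 1) * aC (m : F) (p + 1) (0 + 1) (i : F)) •
        L (i + (((p + 1 : ℕ) : ℤ) - ((0 + 1 : ℕ) : ℤ)) * m)) = X0 (0 + 1) + X1 0 := by
      simp only [X0, X1, V, c, smul_smul, ← add_smul]
      congr 1
      have := aC_succ_one (m : F) (i : F) p
      push_cast
      linear_combination α * this
    have g2 : ∀ q : ℕ, ((p : F) + 1) • ((α ^ (q + 1 + 1) *
        aC (m : F) (p + 1) (q + 1 + 1) (i : F)) •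
        L (i + (((p + 1 : ℕ) : ℤ) - ((q + 1 + 1 : ℕ) : ℤ)) * m))
          = X0 (q + 1 + 1) + X1 (q + 1) + X2 q := by
      intro q
      simp only [X0, X1, X2, V, c, smul_smul, ← add_smul]
      congr 1
      have := aC_succ_add_two (m : F) (i : F) p q
      push_cast
      linear_combination α ^ (q + 2) * this
    rw [g0, g1, Finset.sum_congr rfl fun q _ => g2 q, Finset.sum_add_distrib,
      Finset.sum_add_distrib]
    abel
  have z1 : X0 (2 * p + 1) = 0 := by simp [X0, hc (2 * p + 1) (by omega)]
  have z2 : X0 (2 * p + 2) = 0 := by simp [X0, hc (2 * p + 2) (by omega)]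
  have z3 : X1 (2 * p + 1) = 0 := by simp [X1, hc (2 * p + 1) (by omega)]
  rw [lhs, rhs, Finset.sum_range_succ X0 (2 * p + 2), Finset.sum_range_succ X0 (2 * p + 1),
    Finset.sum_range_succ X1 (2 * p + 1), z1, z2, z3]
  simp

end Commutators

/-- Witt setting, `Y = exp(α ad L_{−m})(L_m) = L_m + 2αm L_0 + α²m² L_{−m}`:
`L_i Y^r = Σ_{p=0}^{r} Σ_{q=0}^{2p} (−1)^p α^q (r!/(r−p)!) a_q(p,i) Y^{r−p} L_{i+(p−q)m}`. -/
theorem stmt9 {A : Type*} [Ring A] [Algebra F A] (L : ℤ → A)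
    (hL : ∀ i j : ℤ, L i * L j - L j * L i = ((j - i : ℤ) : F) • L (i + j))
    (m : ℤ) (hm : m ≠ 0) (α : F)
    (Y : A) (hY : Y = L m + (2 * α * (m : F)) • L 0 + (α ^ 2 * (m : F) ^ 2) • L (-m))
    (r : ℕ) (i : ℤ) :
    L i * Y ^ r
      = ∑ p ∈ Finset.range (r + 1), ∑ q ∈ Finset.range (2 * p + 1),
          ((-1 : F) ^ p * α ^ q * (r.factorial : F) / ((r - p).factorial : F) *
              aC (m : F) p q (i : F)) •
            (Y ^ (r - p) * L (i + ((p : ℤ) - (q : ℤ)) * m)) := by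
  let a : Module.End F A := LinearMap.mulLeft F Y
  let b : Module.End F A := LinearMap.mulRight F Y - LinearMap.mulLeft F Y
  have hab : Commute b a :=
    ((LinearMap.commute_mulLeft_right (R := F) Y Y).symm).sub_left (Commute.refl _)
  have hb : ∀ p : ℕ, (b ^ p) (L i) = ((-1 : F) ^ p * (p.factorial : F)) • adPow L m α i p := by
    intro p
    induction p with
    | zero => simp [adPow, aC_zero_zero]
    | succ p ih =>
      have h := commutator_adPow L hL m α Y hY i p
      have hb1 : b (adPow L m α i p) = -(((p : F) + 1) • adPow L m α i (p + 1)) := by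
        rw [← h]; simp [b]
      rw [pow_succ', Module.End.mul_apply, ih, map_smul, hb1, Nat.factorial_succ]
      push_cast
      module
  have hR : L i * Y ^ r = ((b + a) ^ r) (L i) := by
    have : b + a = LinearMap.mulRight F Y := by simp [a, b]
    rw [this, LinearMap.pow_mulRight, LinearMap.mulRight_apply]
  rw [hR, hab.add_pow, LinearMap.sum_apply]
  refine Finset.sum_congr rfl fun p hp => ?_
  have hpr : p ≤ r := by have := Finset.mem_range.mp hp; omega
  have hf : ((r - p).factorial : F) ≠ 0 := by exact_mod_cast (r - p).factorial_ne_zero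
  have hch : (r.choose p : F) * (p.factorial : F) * ((r - p).factorial : F)
      = (r.factorial : F) := by
    exact_mod_cast Nat.choose_mul_factorial_mul_factorial hpr
  have hap : ∀ x : A, (a ^ (r - p)) x = Y ^ (r - p) * x := by
    intro x
    rw [LinearMap.pow_mulLeft, LinearMap.mulLeft_apply]
  have hcast : ((r.choose p : ℕ) : Module.End F A) (L i) = (r.choose p : F) • L i := by
    rw [Module.End.natCast_apply, Nat.cast_smul_eq_nsmul]
  rw [Module.End.mul_apply, hcast, map_smul, (hab.pow_pow p (r - p)).eq, Module.End.mul_apply, hb,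
    map_smul, hap, adPow, Finset.mul_sum, Finset.smul_sum, Finset.smul_sum]
  refine Finset.sum_congr rfl fun q _ => ?_
  rw [mul_smul_comm, smul_smul, smul_smul]
  congr 1
  rw [← hch]
  field_simp
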